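/- For contact angle γ = π/2 and any A > 0, C > 0, the dimensionless total force F has at most two zeros on [0, π]: the set {φ ∈ [0, π] : F(φ) = 0} has at most two elements. -/

import Mathlib

/-! A function that starts out negative and vanishes three times has, by the mean value theorem,
a positive slope somewhere before its first zero and a zero slope between consecutive zeros; strict
quasiconcavity of the derivative forbids this pattern. For `γ = π / 2` the derivative of the total
force depends on `φ` only through `s = sin ((φ + π / 2) / 2)`, because `sin φ = 2 * s ^ 2 - 1`. It
is a quartic polynomial in `s` that increases on the range `√(1 / 2) ≤ s` corresponding to
`0 ≤ φ ≤ π`, and hence inherits quasiconcavity from `s`, a strictly concave function of `φ`. -/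

section

open Real Set

section StrictQuasiconcaveOn

variable {α β δ : Type*} [Preorder α] [LinearOrder β]

/-- Strict quasiconcavity of a function of one variable: no interior value is as low as both outer
ones. Betweenness is expressed through the order instead of convex combinations, so that the notion
is invariant under strictly increasing changes of variable and of value. -/
def StrictQuasiconcaveOn (s : Set α) (f : α → β) : Prop :=
  ∀ ⦃x⦄, x ∈ s → ∀ ⦃y⦄, y ∈ s → ∀ ⦃z⦄, z ∈ s → x < y → y < z → min (f x) (f z) < f y

theorem StrictQuasiconcaveOn.mono {s t : Set α} {f : α → β} (hf : StrictQuasiconcaveOn t f)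
    (hst : s ⊆ t) : StrictQuasiconcaveOn s f :=
  fun _ hx _ hy _ hz => hf (hst hx) (hst hy) (hst hz)

theorem StrictQuasiconcaveOn.comp_strictMonoOn [Preorder δ] {s : Set δ} {t : Set α} {f : α → β}
    {g : δ → α} (hf : StrictQuasiconcaveOn t f) (hg : StrictMonoOn g s) (hst : MapsTo g s t) :
    StrictQuasiconcaveOn s (f ∘ g) :=
  fun _ hx _ hy _ hz hxy hyz => hf (hst hx) (hst hy) (hst hz) (hg hx hy hxy) (hg hy hz hyz)

theorem StrictQuasiconcaveOn.strictMonoOn_comp [LinearOrder δ] {s : Set α} {t : Set β}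
    {f : α → β} {g : β → δ} (hf : StrictQuasiconcaveOn s f) (hg : StrictMonoOn g t)
    (hst : MapsTo f s t) : StrictQuasiconcaveOn s (g ∘ f) :=
  fun _ hx _ hy _ hz hxy hyz => min_lt_iff.2 <|
    (min_lt_iff.1 (hf hx hy hz hxy hyz)).imp (hg (hst hx) (hst hy)) (hg (hst hz) (hst hy))

theorem strictQuasiconcaveOn_of_strictConcaveOn {𝕜 M : Type*} [Field 𝕜] [LinearOrder 𝕜]
    [IsStrictOrderedRing 𝕜] [AddCommMonoid M] [LinearOrder M] [IsOrderedAddMonoid M] [Module 𝕜 M]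
    [PosSMulStrictMono 𝕜 M] {s : Set 𝕜} {f : 𝕜 → M} (hf : StrictConcaveOn 𝕜 s f) :
    StrictQuasiconcaveOn s f := fun x hx _ _ z hz hxy hyz =>
  have hxz : x < z := hxy.trans hyz
  hf.lt_on_openSegment hx hz hxz.ne (openSegment_eq_Ioo hxz ▸ ⟨hxy, hyz⟩)

end StrictQuasiconcaveOn

section ZeroCounting

theorem encard_le_two_of_forall_lt_not_lt {α : Type*} [LinearOrder α] {s : Set α}
    (h : ∀ x ∈ s, ∀ y ∈ s, ∀ z ∈ s, x < y → ¬ y < z) : s.encard ≤ 2 := by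
  by_contra! hs
  obtain ⟨t, hts, ht⟩ := exists_subset_encard_eq (k := (3 : ℕ)) (Order.add_one_le_of_lt hs)
  lift t to Finset α using finite_of_encard_eq_coe ht
  have hcard : t.card = 3 := by rwa [encard_coe_eq_coe_finsetCard, Nat.cast_inj] at ht
  let e : Fin 3 ↪o α := t.orderEmbOfFin hcard
  have he (i : Fin 3) : e i ∈ s := hts (t.orderEmbOfFin_mem hcard i)
  exact h _ (he 0) _ (he 1) _ (he 2) (e.strictMono (by decide)) (e.strictMono (by decide))

variable {f f' : ℝ → ℝ} {a b : ℝ}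

theorem exists_hasDerivAt_pos_of_lt (hab : a < b) (hfc : ContinuousOn f (Icc a b))
    (hff' : ∀ x ∈ Ioo a b, HasDerivAt f (f' x) x) (hfab : f a < f b) :
    ∃ c ∈ Ioo a b, 0 < f' c := by
  obtain ⟨c, hc, hslope⟩ := exists_hasDerivAt_eq_slope f f' hab hfc hff'
  exact ⟨c, hc, hslope ▸ div_pos (sub_pos.2 hfab) (sub_pos.2 hab)⟩

theorem encard_zeros_le_two_of_strictQuasiconcaveOn_deriv (hfc : ContinuousOn f (Icc a b))
    (hff' : ∀ x ∈ Ioo a b, HasDerivAt f (f' x) x) (hf' : StrictQuasiconcaveOn (Ioo a b) f')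
    (ha : f a < 0) : {x ∈ Icc a b | f x = 0}.encard ≤ 2 := by
  refine encard_le_two_of_forall_lt_not_lt ?_
  rintro x ⟨hx, hfx⟩ y ⟨hy, hfy⟩ z ⟨hz, hfz⟩ hxy hyz
  have hax : a < x := hx.1.lt_of_ne (by rintro rfl; exact ha.ne hfx)
  obtain ⟨p, hp, hp_pos⟩ := exists_hasDerivAt_pos_of_lt hax
    (hfc.mono (Icc_subset_Icc_right hx.2)) (fun t ht => hff' t (Ioo_subset_Ioo_right hx.2 ht))
    (ha.trans_eq hfx.symm)
  obtain ⟨q, hq, hq_zero⟩ := exists_hasDerivAt_eq_zero hxy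
    (hfc.mono (Icc_subset_Icc hx.1 hy.2)) (hfx.trans hfy.symm)
    (fun t ht => hff' t (Ioo_subset_Ioo hx.1 hy.2 ht))
  obtain ⟨r, hr, hr_zero⟩ := exists_hasDerivAt_eq_zero hyz
    (hfc.mono (Icc_subset_Icc hy.1 hz.2)) (hfy.trans hfz.symm)
    (fun t ht => hff' t (Ioo_subset_Ioo hy.1 hz.2 ht))
  have hmin : min (f' p) (f' r) < f' q :=
    hf' (Ioo_subset_Ioo_right hx.2 hp) (Ioo_subset_Ioo hx.1 hy.2 hq)
      (Ioo_subset_Ioo hy.1 hz.2 hr) (hp.2.trans hq.1) (hq.2.trans hr.1)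
  rw [hr_zero, hq_zero, min_eq_right hp_pos.le] at hmin
  exact hmin.false

end ZeroCounting

section HalfAngle

theorem sin_eq_two_mul_sin_half_shift_sq_sub_one (x : ℝ) :
    sin x = 2 * sin ((x + π / 2) / 2) ^ 2 - 1 := by
  have hdouble : cos (2 * ((x + π / 2) / 2)) = -sin x := by
    rw [mul_div_cancel₀ _ two_ne_zero, cos_add_pi_div_two]
  rw [cos_two_mul, cos_sq'] at hdouble
  linarith

theorem cos_eq_two_mul_sin_half_shift_mul_cos_half_shift (x : ℝ) :
    cos x = 2 * sin ((x + π / 2) / 2) * cos ((x + π / 2) / 2) := by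
  rw [← sin_two_mul, mul_div_cancel₀ _ two_ne_zero, sin_add_pi_div_two]

theorem strictQuasiconcaveOn_sin_half_shift :
    StrictQuasiconcaveOn (Icc 0 π) fun x => sin ((x + π / 2) / 2) := by
  have hmono : StrictMonoOn (fun x : ℝ => (x + π / 2) / 2) (Icc 0 π) :=
    fun x _ y _ hxy => by dsimp only; gcongr
  have hmaps : MapsTo (fun x : ℝ => (x + π / 2) / 2) (Icc 0 π) (Icc 0 π) :=
    fun x hx => ⟨by linarith [hx.1, pi_pos], by linarith [hx.2, pi_pos]⟩
  exact (strictQuasiconcaveOn_of_strictConcaveOn strictConcaveOn_sin_Icc).comp_strictMonoOn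
    hmono hmaps

theorem sqrt_half_le_sin_half_shift {x : ℝ} (hx : x ∈ Icc 0 π) :
    √(1 / 2) ≤ sin ((x + π / 2) / 2) := by
  have hnonneg : 0 ≤ sin ((x + π / 2) / 2) :=
    sin_nonneg_of_mem_Icc ⟨by linarith [hx.1, pi_pos], by linarith [hx.2, pi_pos]⟩
  refine (sqrt_le_left hnonneg).2 ?_
  linarith [sin_nonneg_of_mem_Icc hx, sin_eq_two_mul_sin_half_shift_sq_sub_one x]

end HalfAngle

section TotalForce

/-- The dimensionless total force at `φ`, for contact angle `γ`. -/
noncomputable def totalForce (γ A C φ : ℝ) : ℝ :=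
  -A * C ^ 2 - 2 * sin (φ + γ) - 4 * C * cos ((φ + γ) / 2) * sin φ
    - (1 / 2) * C ^ 2 * sin (2 * φ) + C ^ 2 * φ

/-- The derivative of the total force for contact angle `π / 2`, as a polynomial in
`s = sin ((φ + π / 2) / 2)`; the factor `2 * s ^ 2 - 1` is `sin φ`. -/
def forceSlope (C s : ℝ) : ℝ :=
  2 * ((2 * s ^ 2 - 1) + C ^ 2 * (2 * s ^ 2 - 1) ^ 2 + C * (6 * s ^ 3 - 5 * s))

theorem hasDerivAt_totalForce (γ A C x : ℝ) :
    HasDerivAt (totalForce γ A C)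
      (-2 * cos (x + γ) + 2 * C * sin ((x + γ) / 2) * sin x
        - 4 * C * cos ((x + γ) / 2) * cos x + 2 * C ^ 2 * sin x ^ 2) x := by
  have hshift : HasDerivAt (fun φ : ℝ => φ + γ) 1 x := (hasDerivAt_id x).add_const γ
  have hhalf : HasDerivAt (fun φ : ℝ => (φ + γ) / 2) (1 / 2) x := hshift.div_const 2
  have hdouble : HasDerivAt (fun φ : ℝ => 2 * φ) (2 * 1) x := (hasDerivAt_id x).const_mul 2
  refine (((((hshift.sin.const_mul 2).const_sub (-A * C ^ 2)).sub
    ((hhalf.cos.const_mul (4 * C)).mul (hasDerivAt_sin x))).sub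
    (hdouble.sin.const_mul ((1 / 2) * C ^ 2))).add
    ((hasDerivAt_id x).const_mul (C ^ 2))).congr_deriv ?_
  rw [cos_two_mul, cos_sq']
  ring

theorem hasDerivAt_totalForce_pi_div_two (A C x : ℝ) :
    HasDerivAt (totalForce (π / 2) A C) (forceSlope C (sin ((x + π / 2) / 2))) x := by
  refine (hasDerivAt_totalForce (π / 2) A C x).congr_deriv ?_
  rw [cos_add_pi_div_two, cos_eq_two_mul_sin_half_shift_mul_cos_half_shift x,
    sin_eq_two_mul_sin_half_shift_sq_sub_one x, forceSlope]
  linear_combination (-8 * C * sin ((x + π / 2) / 2)) * sin_sq_add_cos_sq ((x + π / 2) / 2)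

theorem strictMonoOn_forceSlope {C : ℝ} (hC : 0 ≤ C) :
    StrictMonoOn (forceSlope C) (Ici √(1 / 2)) := by
  intro s hs t _ hst
  have hs_nonneg : 0 ≤ s := (sqrt_nonneg _).trans hs
  have hs_sq : 1 / 2 ≤ s ^ 2 := (sqrt_le_left hs_nonneg).1 hs
  have hlin : 2 * s ^ 2 - 1 < 2 * t ^ 2 - 1 := by gcongr
  have hsq : (2 * s ^ 2 - 1) ^ 2 ≤ (2 * t ^ 2 - 1) ^ 2 :=
    pow_le_pow_left₀ (by linarith) hlin.le 2
  have hcubic : 6 * s ^ 3 - 5 * s ≤ 6 * t ^ 3 - 5 * t := by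
    have hprod : s * s ≤ t * s := mul_le_mul_of_nonneg_right hst.le hs_nonneg
    have hfactor : 0 ≤ 6 * (t ^ 2 + t * s + s ^ 2) - 5 := by linarith
    linarith [mul_nonneg (sub_nonneg.2 hst.le) hfactor]
  unfold forceSlope
  linarith [mul_le_mul_of_nonneg_left hsq (sq_nonneg C), mul_le_mul_of_nonneg_left hcubic hC]

theorem strictQuasiconcaveOn_deriv_totalForce {C : ℝ} (hC : 0 ≤ C) :
    StrictQuasiconcaveOn (Icc 0 π) fun x => forceSlope C (sin ((x + π / 2) / 2)) :=
  strictQuasiconcaveOn_sin_half_shift.strictMonoOn_comp (strictMonoOn_forceSlope hC)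
    fun _ => sqrt_half_le_sin_half_shift

theorem total_force_at_most_two_zeros_general {A C : ℝ} (hA : -2 < A * C ^ 2) (hC : 0 ≤ C) :
    {φ ∈ Icc 0 π | totalForce (π / 2) A C φ = 0}.encard ≤ 2 := by
  have hderiv := hasDerivAt_totalForce_pi_div_two A C
  have hstart : totalForce (π / 2) A C 0 < 0 := by
    simp only [totalForce, zero_add, sin_pi_div_two, mul_zero, sin_zero]
    linarith
  exact encard_zeros_le_two_of_strictQuasiconcaveOn_deriv
    (HasDerivAt.continuousOn fun x _ => hderiv x) (fun x _ => hderiv x)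
    ((strictQuasiconcaveOn_deriv_totalForce hC).mono Ioo_subset_Icc_self) hstart

end TotalForce

end

/-- For `γ = π/2` and any `A, C > 0`, the dimensionless total force has at most two zeros
on `[0, π]`. -/
theorem total_force_at_most_two_zeros (A C : ℝ) (hA : 0 < A) (hC : 0 < C)
    (F : ℝ → ℝ)
    (hF : F = fun φ => -A * C ^ 2 - 2 * Real.sin (φ + Real.pi / 2)
      - 4 * C * Real.cos ((φ + Real.pi / 2) / 2) * Real.sin φ
      - (1 / 2) * C ^ 2 * Real.sin (2 * φ) + C ^ 2 * φ) :
    Set.encard {φ ∈ Set.Icc (0 : ℝ) Real.pi | F φ = 0} ≤ 2 := by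
  subst hF
  exact total_force_at_most_two_zeros_general (by linarith [mul_pos hA (pow_pos hC 2)]) hC.le
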